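/- Assume 0 < ε ≤ 1/15, 0.9·d_0 ≤ d ≤ 1.1·d_0, 0.9·d_{i0} ≤ d_i ≤ 1.1·d_{i0} for all i, ρ ≥ d² + 2‖e‖², the Local RIP holds, ‖𝒜*(e)‖ ≤ εd_0/(10√2·sκ), and ‖𝒜‖ ≥ 1 where ‖𝒜‖ is the operator norm of 𝒜 from block-diagonal matrices with the Frobenius norm to ℂ^L. Then for all z = (h,x) and w = (u,v) with both z and z + w in 𝒩_ε ∩ 𝒩_F̃: ‖∇F̃(z+w) − ∇F̃(z)‖ ≤ C_L·‖w‖ with C_L = 10‖𝒜‖²d_0 + (2ρ/min_i d_{i0})·(5 + 2L/μ²). -/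

import Mathlib

noncomputable section
open Finset ComplexConjugate

namespace RGD

/-- Squared Euclidean norm of a complex vector. -/
def vnormSq {n : ℕ} (v : Fin n → ℂ) : ℝ := ∑ j, ‖v j‖ ^ 2

/-- Euclidean norm of a complex vector. -/
def vnorm {n : ℕ} (v : Fin n → ℂ) : ℝ := Real.sqrt (vnormSq v)

/-- Inner product, conjugate-linear in the first argument. -/
def vinner {n : ℕ} (u v : Fin n → ℂ) : ℂ := ∑ j, conj (u j) * v j

/-- Squared Frobenius norm of a matrix. -/
def frobSq {K N : ℕ} (Z : Matrix (Fin K) (Fin N) ℂ) : ℝ := ∑ k, ∑ j, ‖Z k j‖ ^ 2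

/-- Frobenius norm of a matrix. -/
def frob {K N : ℕ} (Z : Matrix (Fin K) (Fin N) ℂ) : ℝ := Real.sqrt (frobSq Z)

/-- Frobenius inner product `⟨U,V⟩ = Tr(U*V)`, conjugate-linear in the first argument. -/
def finner {K N : ℕ} (U V : Matrix (Fin K) (Fin N) ℂ) : ℂ := ∑ k, ∑ j, conj (U k j) * V k j

/-- Spectral (operator) norm of a matrix: sup of `‖Zv‖` over the closed unit ball. -/
def opNorm {K N : ℕ} (Z : Matrix (Fin K) (Fin N) ℂ) : ℝ :=
  sSup {r : ℝ | ∃ v : Fin N → ℂ, vnorm v ≤ 1 ∧ r = vnorm (Z.mulVec v)}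

/-- Squared Frobenius norm of a block-diagonal matrix, given by its diagonal blocks. -/
def famFrobSq {K N s : ℕ} (Z : Fin s → Matrix (Fin K) (Fin N) ℂ) : ℝ := ∑ i, frobSq (Z i)

/-- Frobenius norm of a block-diagonal matrix, given by its diagonal blocks. -/
def famFrob {K N s : ℕ} (Z : Fin s → Matrix (Fin K) (Fin N) ℂ) : ℝ := Real.sqrt (famFrobSq Z)

/-- The rank-one matrix `u v*`. -/
def rankOne {K N : ℕ} (u : Fin K → ℂ) (v : Fin N → ℂ) : Matrix (Fin K) (Fin N) ℂ :=
  Matrix.of fun k j => u k * conj (v j)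

/-- `ℋ(h,x)`: block-diagonal matrix with `i`-th block `hᵢ xᵢ*`. -/
def Hmap {K N s : ℕ} (h : Fin s → Fin K → ℂ) (x : Fin s → Fin N → ℂ) :
    Fin s → Matrix (Fin K) (Fin N) ℂ := fun i => rankOne (h i) (x i)

/-- `𝒜ᵢ(Z) = (bₗ* Z aₗ)ₗ`. -/
def calAi {K N L : ℕ} (b : Fin L → Fin K → ℂ) (a : Fin L → Fin N → ℂ)
    (Z : Matrix (Fin K) (Fin N) ℂ) : Fin L → ℂ :=
  fun l => vinner (b l) (Z.mulVec (a l))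

/-- `𝒜(Z) = Σᵢ 𝒜ᵢ(Zᵢ)` on block-diagonal matrices. -/
def calA {K N L s : ℕ} (b : Fin L → Fin K → ℂ) (a : Fin s → Fin L → Fin N → ℂ)
    (Z : Fin s → Matrix (Fin K) (Fin N) ℂ) : Fin L → ℂ :=
  fun l => ∑ i, calAi b (a i) (Z i) l

/-- `𝒜ᵢ*(z) = Σₗ zₗ bₗ aₗ*`. -/
def calAdj {K N L : ℕ} (b : Fin L → Fin K → ℂ) (a : Fin L → Fin N → ℂ)
    (z : Fin L → ℂ) : Matrix (Fin K) (Fin N) ℂ :=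
  Matrix.of fun k j => ∑ l, z l * b l k * conj (a l j)

/-- `‖𝒜*(e)‖ = maxᵢ ‖𝒜ᵢ*(e)‖` (operator norms). -/
def AadjNorm {K N L s : ℕ} (b : Fin L → Fin K → ℂ) (a : Fin s → Fin L → Fin N → ℂ)
    (e : Fin L → ℂ) : ℝ :=
  ⨆ i : Fin s, opNorm (calAdj b (a i) e)

/-- `B*B = I_K`, expressed in terms of the columns `bₗ` of `B*`. -/
def BtBeqI {K L : ℕ} (b : Fin L → Fin K → ℂ) : Prop :=
  ∀ k k' : Fin K, (∑ l, b l k * conj (b l k')) = if k = k' then (1 : ℂ) else 0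

/-- `μ ≥ μ_h`, i.e. `√L ‖B h_{i0}‖_∞ ≤ μ ‖h_{i0}‖` for all `i`. -/
def muhLe {K L s : ℕ} (b : Fin L → Fin K → ℂ) (h0 : Fin s → Fin K → ℂ) (μ : ℝ) : Prop :=
  ∀ i l, Real.sqrt L * ‖vinner (b l) (h0 i)‖ ≤ μ * vnorm (h0 i)

/-- `d₀ = √(Σᵢ d_{i0}²)`. -/
def dtot {s : ℕ} (d0 : Fin s → ℝ) : ℝ := Real.sqrt (∑ i, d0 i ^ 2)

/-- Condition number `κ = (maxᵢ d_{i0}) / (minᵢ d_{i0})`. -/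
def kappa {s : ℕ} (d0 : Fin s → ℝ) : ℝ := (⨆ i, d0 i) / (⨅ i, d0 i)

/-- The observation `y = 𝒜(ℋ(h₀,x₀)) + e`. -/
def yvec {K N L s : ℕ} (b : Fin L → Fin K → ℂ) (a : Fin s → Fin L → Fin N → ℂ)
    (h0 : Fin s → Fin K → ℂ) (x0 : Fin s → Fin N → ℂ) (e : Fin L → ℂ) : Fin L → ℂ :=
  fun l => calA b a (Hmap h0 x0) l + e l

/-- `F(h,x) = ‖𝒜(ℋ(h,x)) − y‖²`. -/
def Fobj {K N L s : ℕ} (b : Fin L → Fin K → ℂ) (a : Fin s → Fin L → Fin N → ℂ)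
    (h0 : Fin s → Fin K → ℂ) (x0 : Fin s → Fin N → ℂ) (e : Fin L → ℂ)
    (h : Fin s → Fin K → ℂ) (x : Fin s → Fin N → ℂ) : ℝ :=
  vnormSq (fun l => calA b a (Hmap h x) l - yvec b a h0 x0 e l)

def G0 (z : ℝ) : ℝ := max (z - 1) 0 ^ 2

def G0' (z : ℝ) : ℝ := 2 * max (z - 1) 0

/-- The `i`-th regularizer `Gᵢ(hᵢ,xᵢ)` (including the factor `ρ`). -/
def Gi {K N L : ℕ} (b : Fin L → Fin K → ℂ) (ρ μ di : ℝ)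
    (hi : Fin K → ℂ) (xi : Fin N → ℂ) : ℝ :=
  ρ * (G0 (vnormSq hi / (2 * di)) + G0 (vnormSq xi / (2 * di))
    + ∑ l, G0 ((L : ℝ) * ‖vinner (b l) hi‖ ^ 2 / (8 * di * μ ^ 2)))

/-- The regularizer `G(h,x) = Σᵢ Gᵢ(hᵢ,xᵢ)`. -/
def Greg {K N L s : ℕ} (b : Fin L → Fin K → ℂ) (ρ μ : ℝ) (dd : Fin s → ℝ)
    (h : Fin s → Fin K → ℂ) (x : Fin s → Fin N → ℂ) : ℝ :=
  ∑ i, Gi b ρ μ (dd i) (h i) (x i)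

/-- `F̃ = F + G`. -/
def Ftil {K N L s : ℕ} (b : Fin L → Fin K → ℂ) (a : Fin s → Fin L → Fin N → ℂ)
    (h0 : Fin s → Fin K → ℂ) (x0 : Fin s → Fin N → ℂ) (e : Fin L → ℂ)
    (ρ μ : ℝ) (dd : Fin s → ℝ)
    (h : Fin s → Fin K → ℂ) (x : Fin s → Fin N → ℂ) : ℝ :=
  Fobj b a h0 x0 e h x + Greg b ρ μ dd h x

/-- The residual `𝒜(ℋ(h,x)) − y`. -/
def residual {K N L s : ℕ} (b : Fin L → Fin K → ℂ) (a : Fin s → Fin L → Fin N → ℂ)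
    (h0 : Fin s → Fin K → ℂ) (x0 : Fin s → Fin N → ℂ) (e : Fin L → ℂ)
    (h : Fin s → Fin K → ℂ) (x : Fin s → Fin N → ℂ) : Fin L → ℂ :=
  fun l => calA b a (Hmap h x) l - yvec b a h0 x0 e l

/-- Wirtinger gradient `∇F_{hᵢ} = 𝒜ᵢ*(𝒜(ℋ(h,x)) − y) xᵢ`. -/
def gradFh {K N L s : ℕ} (b : Fin L → Fin K → ℂ) (a : Fin s → Fin L → Fin N → ℂ)
    (h0 : Fin s → Fin K → ℂ) (x0 : Fin s → Fin N → ℂ) (e : Fin L → ℂ)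
    (h : Fin s → Fin K → ℂ) (x : Fin s → Fin N → ℂ) (i : Fin s) : Fin K → ℂ :=
  (calAdj b (a i) (residual b a h0 x0 e h x)).mulVec (x i)

/-- Wirtinger gradient `∇F_{xᵢ} = (𝒜ᵢ*(𝒜(ℋ(h,x)) − y))* hᵢ`. -/
def gradFx {K N L s : ℕ} (b : Fin L → Fin K → ℂ) (a : Fin s → Fin L → Fin N → ℂ)
    (h0 : Fin s → Fin K → ℂ) (x0 : Fin s → Fin N → ℂ) (e : Fin L → ℂ)
    (h : Fin s → Fin K → ℂ) (x : Fin s → Fin N → ℂ) (i : Fin s) : Fin N → ℂ :=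
  (calAdj b (a i) (residual b a h0 x0 e h x)).conjTranspose.mulVec (h i)

/-- Wirtinger gradient `∇G_{hᵢ}`. -/
def gradGh {K L s : ℕ} (b : Fin L → Fin K → ℂ) (ρ μ : ℝ) (dd : Fin s → ℝ)
    (h : Fin s → Fin K → ℂ) (i : Fin s) : Fin K → ℂ :=
  fun k => ((ρ / (2 * dd i) : ℝ) : ℂ) *
    (((G0' (vnormSq (h i) / (2 * dd i)) : ℝ) : ℂ) * h i k
      + (((L : ℝ) / (4 * μ ^ 2) : ℝ) : ℂ) *
        ∑ l, ((G0' ((L : ℝ) * ‖vinner (b l) (h i)‖ ^ 2 / (8 * dd i * μ ^ 2)) : ℝ) : ℂ)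
          * (vinner (b l) (h i) * b l k))

/-- Wirtinger gradient `∇G_{xᵢ}`. -/
def gradGx {N s : ℕ} (ρ : ℝ) (dd : Fin s → ℝ)
    (x : Fin s → Fin N → ℂ) (i : Fin s) : Fin N → ℂ :=
  fun j => ((ρ / (2 * dd i) : ℝ) : ℂ) * (((G0' (vnormSq (x i) / (2 * dd i)) : ℝ) : ℂ) * x i j)

/-- `∇F̃_{hᵢ} = ∇F_{hᵢ} + ∇G_{hᵢ}`. -/
def gradH {K N L s : ℕ} (b : Fin L → Fin K → ℂ) (a : Fin s → Fin L → Fin N → ℂ)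
    (h0 : Fin s → Fin K → ℂ) (x0 : Fin s → Fin N → ℂ) (e : Fin L → ℂ)
    (ρ μ : ℝ) (dd : Fin s → ℝ)
    (h : Fin s → Fin K → ℂ) (x : Fin s → Fin N → ℂ) (i : Fin s) : Fin K → ℂ :=
  fun k => gradFh b a h0 x0 e h x i k + gradGh b ρ μ dd h i k

/-- `∇F̃_{xᵢ} = ∇F_{xᵢ} + ∇G_{xᵢ}`. -/
def gradX {K N L s : ℕ} (b : Fin L → Fin K → ℂ) (a : Fin s → Fin L → Fin N → ℂ)
    (h0 : Fin s → Fin K → ℂ) (x0 : Fin s → Fin N → ℂ) (e : Fin L → ℂ)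
    (ρ μ : ℝ) (dd : Fin s → ℝ)
    (h : Fin s → Fin K → ℂ) (x : Fin s → Fin N → ℂ) (i : Fin s) : Fin N → ℂ :=
  fun j => gradFx b a h0 x0 e h x i j + gradGx ρ dd x i j

/-- `‖∇F̃(h,x)‖²` (squared norm of the stacked Wirtinger gradient). -/
def gradNormSq {K N L s : ℕ} (b : Fin L → Fin K → ℂ) (a : Fin s → Fin L → Fin N → ℂ)
    (h0 : Fin s → Fin K → ℂ) (x0 : Fin s → Fin N → ℂ) (e : Fin L → ℂ)
    (ρ μ : ℝ) (dd : Fin s → ℝ)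
    (h : Fin s → Fin K → ℂ) (x : Fin s → Fin N → ℂ) : ℝ :=
  ∑ i, vnormSq (gradH b a h0 x0 e ρ μ dd h x i) + ∑ i, vnormSq (gradX b a h0 x0 e ρ μ dd h x i)

/-- `‖∇F̃(h',x') − ∇F̃(h,x)‖²`. -/
def gradDiffNormSq {K N L s : ℕ} (b : Fin L → Fin K → ℂ) (a : Fin s → Fin L → Fin N → ℂ)
    (h0 : Fin s → Fin K → ℂ) (x0 : Fin s → Fin N → ℂ) (e : Fin L → ℂ)
    (ρ μ : ℝ) (dd : Fin s → ℝ)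
    (h : Fin s → Fin K → ℂ) (x : Fin s → Fin N → ℂ)
    (h' : Fin s → Fin K → ℂ) (x' : Fin s → Fin N → ℂ) : ℝ :=
  ∑ i, vnormSq (fun k => gradH b a h0 x0 e ρ μ dd h' x' i k - gradH b a h0 x0 e ρ μ dd h x i k)
  + ∑ i, vnormSq (fun j => gradX b a h0 x0 e ρ μ dd h' x' i j - gradX b a h0 x0 e ρ μ dd h x i j)

/-- Membership in `𝒩_d`. -/
def inNd {K N s : ℕ} (d0 : Fin s → ℝ)
    (h : Fin s → Fin K → ℂ) (x : Fin s → Fin N → ℂ) : Prop :=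
  ∀ i, vnorm (h i) ≤ 2 * Real.sqrt (d0 i) ∧ vnorm (x i) ≤ 2 * Real.sqrt (d0 i)

/-- Membership in `𝒩_μ`. -/
def inNmu {K L s : ℕ} (b : Fin L → Fin K → ℂ) (d0 : Fin s → ℝ) (μ : ℝ)
    (h : Fin s → Fin K → ℂ) : Prop :=
  ∀ i, ∀ l, Real.sqrt L * ‖vinner (b l) (h i)‖ ≤ 4 * Real.sqrt (d0 i) * μ

/-- `δᵢ(hᵢ,xᵢ) = ‖hᵢxᵢ* − h_{i0}x_{i0}*‖_F / d_{i0}`. -/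
def deltaI {K N : ℕ} (h0i : Fin K → ℂ) (x0i : Fin N → ℂ) (d0i : ℝ)
    (hi : Fin K → ℂ) (xi : Fin N → ℂ) : ℝ :=
  frob (rankOne hi xi - rankOne h0i x0i) / d0i

/-- Membership in `𝒩_ε`. -/
def inNeps {K N s : ℕ} (h0 : Fin s → Fin K → ℂ) (x0 : Fin s → Fin N → ℂ)
    (d0 : Fin s → ℝ) (ε : ℝ)
    (h : Fin s → Fin K → ℂ) (x : Fin s → Fin N → ℂ) : Prop :=
  ∀ i, deltaI (h0 i) (x0 i) (d0 i) (h i) (x i) ≤ ε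

/-- The global relative error `δ(h,x) = ‖ℋ(h,x) − X₀‖_F / d₀`. -/
def deltaTot {K N s : ℕ} (h0 : Fin s → Fin K → ℂ) (x0 : Fin s → Fin N → ℂ)
    (d0 : Fin s → ℝ)
    (h : Fin s → Fin K → ℂ) (x : Fin s → Fin N → ℂ) : ℝ :=
  famFrob (fun i => Hmap h x i - Hmap h0 x0 i) / dtot d0

/-- Membership in `𝒩_F̃`. -/
def inNF {K N L s : ℕ} (b : Fin L → Fin K → ℂ) (a : Fin s → Fin L → Fin N → ℂ)
    (h0 : Fin s → Fin K → ℂ) (x0 : Fin s → Fin N → ℂ) (e : Fin L → ℂ)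
    (d0 : Fin s → ℝ) (ρ μ : ℝ) (dd : Fin s → ℝ) (ε : ℝ)
    (h : Fin s → Fin K → ℂ) (x : Fin s → Fin N → ℂ) : Prop :=
  Ftil b a h0 x0 e ρ μ dd h x ≤ ε ^ 2 * dtot d0 ^ 2 / (3 * (s : ℝ) * kappa d0 ^ 2) + vnormSq e

/-- The Local Restricted Isometry Property on `𝒩_d ∩ 𝒩_μ ∩ 𝒩_ε`. -/
def LocalRIP {K N L s : ℕ} (b : Fin L → Fin K → ℂ) (a : Fin s → Fin L → Fin N → ℂ)
    (h0 : Fin s → Fin K → ℂ) (x0 : Fin s → Fin N → ℂ)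
    (d0 : Fin s → ℝ) (μ ε : ℝ) : Prop :=
  ∀ (h : Fin s → Fin K → ℂ) (x : Fin s → Fin N → ℂ),
    inNd d0 h x → inNmu b d0 μ h → inNeps h0 x0 d0 ε h x →
      (2 / 3) * famFrobSq (fun i => Hmap h x i - Hmap h0 x0 i)
          ≤ vnormSq (calA b a fun i => Hmap h x i - Hmap h0 x0 i)
      ∧ vnormSq (calA b a fun i => Hmap h x i - Hmap h0 x0 i)
          ≤ (3 / 2) * famFrobSq (fun i => Hmap h x i - Hmap h0 x0 i)

/-- `α_{i1} = ⟨h_{i0}, hᵢ⟩ / d_{i0}`. -/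
def alpha1 {K s : ℕ} (h0 : Fin s → Fin K → ℂ) (d0 : Fin s → ℝ)
    (h : Fin s → Fin K → ℂ) (i : Fin s) : ℂ :=
  vinner (h0 i) (h i) / ((d0 i : ℝ) : ℂ)

/-- `α_{i2} = ⟨x_{i0}, xᵢ⟩ / d_{i0}`. -/
def alpha2 {N s : ℕ} (x0 : Fin s → Fin N → ℂ) (d0 : Fin s → ℝ)
    (x : Fin s → Fin N → ℂ) (i : Fin s) : ℂ :=
  vinner (x0 i) (x i) / ((d0 i : ℝ) : ℂ)

/-- `δ₀ = δ/10`. -/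
def delta0 {K N s : ℕ} (h0 : Fin s → Fin K → ℂ) (x0 : Fin s → Fin N → ℂ)
    (d0 : Fin s → ℝ) (h : Fin s → Fin K → ℂ) (x : Fin s → Fin N → ℂ) : ℝ :=
  deltaTot h0 x0 d0 h x / 10

/-- `αᵢ = (1−δ₀)α_{i1}` if `‖hᵢ‖ ≥ ‖xᵢ‖`, else `1/((1−δ₀) conj(α_{i2}))`. -/
def alphaC {K N s : ℕ} (h0 : Fin s → Fin K → ℂ) (x0 : Fin s → Fin N → ℂ)
    (d0 : Fin s → ℝ) (h : Fin s → Fin K → ℂ) (x : Fin s → Fin N → ℂ) (i : Fin s) : ℂ :=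
  if vnorm (x i) ≤ vnorm (h i)
  then ((1 - delta0 h0 x0 d0 h x : ℝ) : ℂ) * alpha1 h0 d0 h i
  else 1 / (((1 - delta0 h0 x0 d0 h x : ℝ) : ℂ) * conj (alpha2 x0 d0 x i))

/-- `Δhᵢ = hᵢ − αᵢ h_{i0}`. -/
def dh {K N s : ℕ} (h0 : Fin s → Fin K → ℂ) (x0 : Fin s → Fin N → ℂ)
    (d0 : Fin s → ℝ) (h : Fin s → Fin K → ℂ) (x : Fin s → Fin N → ℂ) (i : Fin s) :
    Fin K → ℂ :=
  fun k => h i k - alphaC h0 x0 d0 h x i * h0 i k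

/-- `Δxᵢ = xᵢ − conj(αᵢ)⁻¹ x_{i0}`. -/
def dx {K N s : ℕ} (h0 : Fin s → Fin K → ℂ) (x0 : Fin s → Fin N → ℂ)
    (d0 : Fin s → ℝ) (h : Fin s → Fin K → ℂ) (x : Fin s → Fin N → ℂ) (i : Fin s) :
    Fin N → ℂ :=
  fun j => x i j - (conj (alphaC h0 x0 d0 h x i))⁻¹ * x0 i j

/-- `σ²_max(h,x) = maxₗ Σᵢ |bₗ*hᵢ|² ‖xᵢ‖²`. -/
def sigmaMaxSq {K N L s : ℕ} (b : Fin L → Fin K → ℂ)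
    (h : Fin s → Fin K → ℂ) (x : Fin s → Fin N → ℂ) : ℝ :=
  ⨆ l : Fin L, ∑ i, ‖vinner (b l) (h i)‖ ^ 2 * vnormSq (x i)

/-- The rank-one bound (Lemma: `𝒜` on block-diagonal matrices with rank-1 blocks). -/
def RankOneBound {K N L s : ℕ} (b : Fin L → Fin K → ℂ)
    (a : Fin s → Fin L → Fin N → ℂ) : Prop :=
  ∀ (h : Fin s → Fin K → ℂ) (x : Fin s → Fin N → ℂ),
    vnormSq (calA b a (Hmap h x)) ≤
      4 / 3 * famFrobSq (Hmap h x)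
      + 2 * Real.sqrt (2 * (s : ℝ) * famFrobSq (Hmap h x) * sigmaMaxSq b h x
          * ((K : ℝ) + N) * Real.log L)
      + 8 * (s : ℝ) * sigmaMaxSq b h x * ((K : ℝ) + N) * Real.log L

/-- The subspace `Tᵢ = {h_{i0} v* + u x_{i0}*}`. -/
def Tspace {K N : ℕ} (h0i : Fin K → ℂ) (x0i : Fin N → ℂ) :
    Set (Matrix (Fin K) (Fin N) ℂ) :=
  {Z | ∃ (u : Fin K → ℂ) (v : Fin N → ℂ), Z = rankOne h0i v + rankOne u x0i}

/-- `P` is the orthogonal projection onto `Tᵢ` w.r.t. the Frobenius inner product. -/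
def IsFrobProj {K N : ℕ} (h0i : Fin K → ℂ) (x0i : Fin N → ℂ)
    (P : Matrix (Fin K) (Fin N) ℂ → Matrix (Fin K) (Fin N) ℂ) : Prop :=
  ∀ Z, P Z ∈ Tspace h0i x0i ∧ ∀ W ∈ Tspace h0i x0i, finner W (Z - P Z) = 0

/-- Operator norm of `𝒜ᵢ` from `(ℂ^{K×N}, ‖·‖_F)` to `(ℂ^L, ‖·‖)`. -/
def calAiOpNorm {K N L : ℕ} (b : Fin L → Fin K → ℂ) (a : Fin L → Fin N → ℂ) : ℝ :=
  sSup {r : ℝ | ∃ Z : Matrix (Fin K) (Fin N) ℂ, frob Z ≤ 1 ∧ r = vnorm (calAi b a Z)}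

/-- Operator norm of `𝒜` from block-diagonal matrices with `‖·‖_F` to `ℂ^L`. -/
def calAOpNorm {K N L s : ℕ} (b : Fin L → Fin K → ℂ)
    (a : Fin s → Fin L → Fin N → ℂ) : ℝ :=
  sSup {r : ℝ | ∃ Z : Fin s → Matrix (Fin K) (Fin N) ℂ, famFrob Z ≤ 1 ∧ r = vnorm (calA b a Z)}

/-- Norm of a stacked vector in `ℂ^{ns}`. -/
def stackNorm {n s : ℕ} (u : Fin s → Fin n → ℂ) : ℝ := Real.sqrt (∑ i, vnormSq (u i))

/-- Norm of a point `z = (h,x) ∈ ℂ^{s(K+N)}`. -/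
def pairNorm {K N s : ℕ} (u : Fin s → Fin K → ℂ) (v : Fin s → Fin N → ℂ) : ℝ :=
  Real.sqrt (∑ i, vnormSq (u i) + ∑ i, vnormSq (v i))

/-- `z + t • w` componentwise, `t` real. -/
def shiftV {n s : ℕ} (u w : Fin s → Fin n → ℂ) (t : ℝ) : Fin s → Fin n → ℂ :=
  fun i k => u i k + (t : ℂ) * w i k

/-- `σ_max(h) = maxₗ √(Σᵢ |bₗ*hᵢ|²)` (unit `xᵢ`'s). -/
def sigmaMaxU {K L s : ℕ} (b : Fin L → Fin K → ℂ) (h : Fin s → Fin K → ℂ) : ℝ :=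
  ⨆ l, Real.sqrt (∑ i, ‖vinner (b l) (h i)‖ ^ 2)

/-!
On the sublevel set `𝒩_F̃` the regularizer is at most `(4/5)²ρ`, so each of its terms is, and the
point lies in `𝒩_d ∩ 𝒩_μ`: all factors `hᵢ`, `xᵢ` have norm at most `2√d₀`, and all arguments of
`G₀'` are bounded.

There, every term of `∇G` is a radial ramp `z ↦ G₀'(c‖z‖²) z`, Lipschitz on `c‖z‖² ≤ R` with
constant `6R - 2`, and `B` being an isometry carries this over to the incoherence terms. For `∇F`,
with `X = ℋ(h,x)` and `r` the residual at `(h,x)`, the difference of gradients at `(h',x')` and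
`(h,x)` is `𝒜*(𝒜(X' - X))` applied to `(x',h')` plus `𝒜*(r)` applied to `(x' - x, h' - h)`. The
first term is controlled by `‖𝒜*‖ = ‖𝒜‖` and the bilinearity of `ℋ`; in the second,
`‖r‖ ≤ ‖𝒜‖ ε d₀ + ‖e‖` on `𝒩_ε`, and `‖𝒜‖ ‖e‖` is absorbed by AM-GM into `‖𝒜‖² d₀` and
`ρ / minᵢ d_{i0}`, since `‖e‖² ≤ ρ/2`.
-/

/-! ### Norms of vectors, block-diagonal matrices and pairs -/

section Norms

variable {K N s n : ℕ}

lemma vnormSq_nonneg (v : Fin n → ℂ) : 0 ≤ vnormSq v :=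
  sum_nonneg fun _ _ => sq_nonneg _

lemma vnorm_nonneg (v : Fin n → ℂ) : 0 ≤ vnorm v := Real.sqrt_nonneg _

lemma vnorm_sq (v : Fin n → ℂ) : vnorm v ^ 2 = vnormSq v := Real.sq_sqrt (vnormSq_nonneg v)

lemma vnorm_eq_norm (v : Fin n → ℂ) : vnorm v = ‖WithLp.toLp 2 v‖ := by
  simp only [vnorm, vnormSq, EuclideanSpace.norm_eq]

lemma vnorm_add_le (v w : Fin n → ℂ) : vnorm (v + w) ≤ vnorm v + vnorm w := by
  simpa only [vnorm_eq_norm, WithLp.toLp_add] using norm_add_le _ _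

lemma vnorm_smul (c : ℝ) (v : Fin n → ℂ) : vnorm (c • v) = |c| * vnorm v := by
  simp only [vnorm_eq_norm, WithLp.toLp_smul, norm_smul, Real.norm_eq_abs]

lemma vnorm_le_mul_vnorm {v w : Fin n → ℂ} {C : ℝ} (hC : 0 ≤ C)
    (hvw : ∀ j, ‖v j‖ ≤ C * ‖w j‖) : vnorm v ≤ C * vnorm w := by
  refine le_of_sq_le_sq ?_ (mul_nonneg hC (vnorm_nonneg w))
  rw [mul_pow, vnorm_sq, vnorm_sq, vnormSq, vnormSq, mul_sum]
  refine sum_le_sum fun j _ => ?_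
  rw [← mul_pow]
  exact pow_le_pow_left₀ (norm_nonneg _) (hvw j) 2

lemma frobSq_nonneg (Z : Matrix (Fin K) (Fin N) ℂ) : 0 ≤ frobSq Z :=
  sum_nonneg fun _ _ => sum_nonneg fun _ _ => sq_nonneg _

lemma frob_nonneg (Z : Matrix (Fin K) (Fin N) ℂ) : 0 ≤ frob Z := Real.sqrt_nonneg _

lemma frob_sq (Z : Matrix (Fin K) (Fin N) ℂ) : frob Z ^ 2 = frobSq Z :=
  Real.sq_sqrt (frobSq_nonneg Z)

section Frobenius

open scoped Matrix.Norms.Frobenius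

lemma frob_eq_norm (Z : Matrix (Fin K) (Fin N) ℂ) : frob Z = ‖Z‖ := by
  simp only [frob, frobSq, Matrix.frobenius_norm_def, Real.sqrt_eq_rpow, Real.rpow_two]

lemma frob_add_le (Y Z : Matrix (Fin K) (Fin N) ℂ) : frob (Y + Z) ≤ frob Y + frob Z := by
  simpa only [frob_eq_norm] using norm_add_le Y Z

lemma frob_conjTranspose (Z : Matrix (Fin K) (Fin N) ℂ) : frob Z.conjTranspose = frob Z := by
  simpa only [frob_eq_norm] using Matrix.frobenius_norm_conjTranspose Z

lemma vnorm_mulVec_le (Z : Matrix (Fin K) (Fin N) ℂ) (v : Fin N → ℂ) :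
    vnorm (Z.mulVec v) ≤ frob Z * vnorm v := by
  simpa only [vnorm_eq_norm, frob_eq_norm, ← Matrix.frobenius_norm_replicateCol (ι := Unit),
    Matrix.replicateCol_mulVec] using Matrix.frobenius_norm_mul Z (Matrix.replicateCol Unit v)

end Frobenius

lemma frob_rankOne (u : Fin K → ℂ) (v : Fin N → ℂ) : frob (rankOne u v) = vnorm u * vnorm v := by
  rw [vnorm, vnorm, ← Real.sqrt_mul (vnormSq_nonneg u)]
  simp [frob, frobSq, rankOne, vnormSq, sum_mul_sum, mul_pow]

lemma famFrobSq_nonneg (Z : Fin s → Matrix (Fin K) (Fin N) ℂ) : 0 ≤ famFrobSq Z :=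
  sum_nonneg fun _ _ => frobSq_nonneg _

lemma famFrob_nonneg (Z : Fin s → Matrix (Fin K) (Fin N) ℂ) : 0 ≤ famFrob Z := Real.sqrt_nonneg _

lemma famFrob_sq (Z : Fin s → Matrix (Fin K) (Fin N) ℂ) : famFrob Z ^ 2 = ∑ i, frob (Z i) ^ 2 := by
  rw [famFrob, Real.sq_sqrt (famFrobSq_nonneg Z), famFrobSq]
  simp only [frob_sq]

lemma frob_le_famFrob (Z : Fin s → Matrix (Fin K) (Fin N) ℂ) (i : Fin s) :
    frob (Z i) ≤ famFrob Z :=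
  Real.sqrt_le_sqrt (single_le_sum (f := fun i => frobSq (Z i)) (fun _ _ => frobSq_nonneg _)
    (mem_univ i))

lemma pairNorm_nonneg (u : Fin s → Fin K → ℂ) (v : Fin s → Fin N → ℂ) : 0 ≤ pairNorm u v :=
  Real.sqrt_nonneg _

lemma pairNorm_comm (u : Fin s → Fin K → ℂ) (v : Fin s → Fin N → ℂ) :
    pairNorm u v = pairNorm v u := by
  rw [pairNorm, pairNorm, add_comm]

lemma pairNorm_sq (u : Fin s → Fin K → ℂ) (v : Fin s → Fin N → ℂ) :
    pairNorm u v ^ 2 = ∑ i, (vnorm (u i) ^ 2 + vnorm (v i) ^ 2) := by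
  simp only [vnorm_sq, sum_add_distrib]
  exact Real.sq_sqrt (add_nonneg (sum_nonneg fun _ _ => vnormSq_nonneg _)
    (sum_nonneg fun _ _ => vnormSq_nonneg _))

/-- The stacked vector `(u, v) ∈ ℂ^{s(K+N)}`, as a point of a single Euclidean space. -/
def stackedPair (u : Fin s → Fin K → ℂ) (v : Fin s → Fin N → ℂ) :
    EuclideanSpace ℂ ((Fin s × Fin K) ⊕ (Fin s × Fin N)) :=
  WithLp.toLp 2 (Sum.elim (fun p => u p.1 p.2) fun p => v p.1 p.2)

lemma pairNorm_eq_norm (u : Fin s → Fin K → ℂ) (v : Fin s → Fin N → ℂ) :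
    pairNorm u v = ‖stackedPair u v‖ := by
  simp [pairNorm, stackedPair, vnormSq, EuclideanSpace.norm_eq, Fintype.sum_prod_type]

lemma stackedPair_add (u u' : Fin s → Fin K → ℂ) (v v' : Fin s → Fin N → ℂ) :
    stackedPair (u + u') (v + v') = stackedPair u v + stackedPair u' v' := by
  ext (p | p) <;> simp [stackedPair]

lemma pairNorm_add_le (u u' : Fin s → Fin K → ℂ) (v v' : Fin s → Fin N → ℂ) :
    pairNorm (u + u') (v + v') ≤ pairNorm u v + pairNorm u' v' := by
  simpa only [pairNorm_eq_norm, stackedPair_add] using norm_add_le _ _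

lemma pairNorm_le_mul_pairNorm {K' N' : ℕ} {p : Fin s → Fin K → ℂ} {q : Fin s → Fin N → ℂ}
    {u : Fin s → Fin K' → ℂ} {v : Fin s → Fin N' → ℂ} {C : ℝ} (hC : 0 ≤ C)
    (hp : ∀ i, vnorm (p i) ≤ C * vnorm (u i)) (hq : ∀ i, vnorm (q i) ≤ C * vnorm (v i)) :
    pairNorm p q ≤ C * pairNorm u v := by
  refine le_of_sq_le_sq ?_ (mul_nonneg hC (pairNorm_nonneg _ _))
  rw [mul_pow, pairNorm_sq, pairNorm_sq, mul_sum]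
  refine sum_le_sum fun i _ => ?_
  rw [mul_add, ← mul_pow, ← mul_pow]
  exact add_le_add (pow_le_pow_left₀ (vnorm_nonneg _) (hp i) 2)
    (pow_le_pow_left₀ (vnorm_nonneg _) (hq i) 2)

end Norms

/-! ### The measurement operator -/

section Measurement

open scoped Matrix Matrix.Norms.L2Operator

variable {K N L s : ℕ} (b : Fin L → Fin K → ℂ) (a : Fin s → Fin L → Fin N → ℂ)

/-- The vector of all entries of the diagonal blocks; it identifies block-diagonal matrices under
the Frobenius norm with a Euclidean space. -/
def blockVec (Z : Fin s → Matrix (Fin K) (Fin N) ℂ) : Fin s × Fin K × Fin N → ℂ :=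
  fun p => Z p.1 p.2.1 p.2.2

/-- The matrix of `𝒜` with respect to the coordinates `blockVec`. Its conjugate transpose is the
matrix of `𝒜*`, and its `ℓ²` operator norm is `‖𝒜‖`. -/
def measurementMatrix : Matrix (Fin L) (Fin s × Fin K × Fin N) ℂ :=
  Matrix.of fun l p => conj (b l p.2.1) * a p.1 l p.2.2

lemma famFrob_eq_norm (Z : Fin s → Matrix (Fin K) (Fin N) ℂ) :
    famFrob Z = ‖WithLp.toLp 2 (blockVec Z)‖ := by
  simp [famFrob, famFrobSq, frobSq, blockVec, EuclideanSpace.norm_eq, Fintype.sum_prod_type]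

lemma blockVec_surjective :
    Function.Surjective (blockVec : (Fin s → Matrix (Fin K) (Fin N) ℂ) → _) :=
  fun w => ⟨fun i => Matrix.of fun k j => w (i, k, j), rfl⟩

lemma calA_eq_mulVec (Z : Fin s → Matrix (Fin K) (Fin N) ℂ) :
    calA b a Z = measurementMatrix b a *ᵥ blockVec Z := by
  ext l
  simp only [calA, calAi, vinner, Matrix.mulVec, dotProduct, measurementMatrix, blockVec,
    Matrix.of_apply, Fintype.sum_prod_type, mul_sum]
  refine sum_congr rfl fun i _ => sum_congr rfl fun k _ => sum_congr rfl fun j _ => ?_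
  ring

lemma blockVec_calAdj (z : Fin L → ℂ) :
    blockVec (fun i => calAdj b (a i) z) = (measurementMatrix b a)ᴴ *ᵥ z := by
  ext p
  simp only [blockVec, calAdj, Matrix.of_apply, Matrix.mulVec, dotProduct,
    Matrix.conjTranspose_apply, measurementMatrix, star_mul', Complex.star_def, Complex.conj_conj]
  exact sum_congr rfl fun l _ => by ring

lemma calA_sub (Y Z : Fin s → Matrix (Fin K) (Fin N) ℂ) :
    calA b a (Y - Z) = calA b a Y - calA b a Z := by
  simp only [calA_eq_mulVec, ← Matrix.mulVec_sub]
  rfl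

lemma calAdj_add (c : Fin L → Fin N → ℂ) (y z : Fin L → ℂ) :
    calAdj b c (y + z) = calAdj b c y + calAdj b c z := by
  ext k j
  simp only [calAdj, Matrix.of_apply, Matrix.add_apply, Pi.add_apply, add_mul, sum_add_distrib]

lemma calAOpNorm_eq_norm : calAOpNorm b a = ‖measurementMatrix b a‖ := by
  rw [Matrix.l2_opNorm_def, ← ContinuousLinearMap.sSup_unitClosedBall_eq_norm, calAOpNorm]
  congr 1
  ext r
  simp only [Set.mem_ofPred_eq, Set.mem_image, mem_closedBall_zero_iff,
    (WithLp.toLp_surjective 2).exists, blockVec_surjective.exists, vnorm_eq_norm,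
    calA_eq_mulVec, famFrob_eq_norm, eq_comm (a := r)]
  rfl

lemma calAOpNorm_nonneg : 0 ≤ calAOpNorm b a := by
  rw [calAOpNorm_eq_norm]
  exact norm_nonneg _

lemma vnorm_calA_le (Z : Fin s → Matrix (Fin K) (Fin N) ℂ) :
    vnorm (calA b a Z) ≤ calAOpNorm b a * famFrob Z := by
  rw [vnorm_eq_norm, calA_eq_mulVec, calAOpNorm_eq_norm, famFrob_eq_norm]
  exact Matrix.l2_opNorm_mulVec (measurementMatrix b a) (WithLp.toLp 2 (blockVec Z))

lemma famFrob_calAdj_le (z : Fin L → ℂ) :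
    famFrob (fun i => calAdj b (a i) z) ≤ calAOpNorm b a * vnorm z := by
  rw [vnorm_eq_norm, famFrob_eq_norm, blockVec_calAdj, calAOpNorm_eq_norm,
    ← Matrix.l2_opNorm_conjTranspose]
  exact Matrix.l2_opNorm_mulVec (measurementMatrix b a)ᴴ (WithLp.toLp 2 z)

end Measurement

/-! ### The isometry `B` -/

section Isometry

open scoped Matrix Matrix.Norms.L2Operator

variable {K L : ℕ}

/-- The matrix `B ∈ ℂ^{L×K}` of the paper: its rows are the `bₗ*`. -/
def analysisMatrix (b : Fin L → Fin K → ℂ) : Matrix (Fin L) (Fin K) ℂ :=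
  Matrix.of fun l k => conj (b l k)

lemma vinner_eq_analysisMatrix_mulVec (b : Fin L → Fin K → ℂ) (u : Fin K → ℂ) (l : Fin L) :
    vinner (b l) u = (analysisMatrix b *ᵥ u) l := rfl

lemma l2_opNorm_le_one_of_conjTranspose_mul_self {m n : Type*} [Fintype m] [Fintype n]
    [DecidableEq n] {A : Matrix m n ℂ} (hA : Aᴴ * A = 1) : ‖A‖ ≤ 1 := by
  classical
  have h_one : ‖(1 : Matrix n n ℂ)‖ ≤ 1 := by
    rw [← Matrix.diagonal_one, Matrix.l2_opNorm_diagonal]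
    exact (pi_norm_le_iff_of_nonneg zero_le_one).2 fun _ => by simp
  rw [← hA, Matrix.l2_opNorm_conjTranspose_mul_self] at h_one
  nlinarith only [h_one]

variable {b : Fin L → Fin K → ℂ}

lemma BtBeqI.l2_opNorm_analysisMatrix_le_one (hb : BtBeqI b) : ‖analysisMatrix b‖ ≤ 1 := by
  refine l2_opNorm_le_one_of_conjTranspose_mul_self ?_
  ext k k'
  simpa [Matrix.mul_apply, analysisMatrix, Matrix.one_apply] using hb k k'

lemma BtBeqI.vnorm_analysisMatrix_mulVec_le (hb : BtBeqI b) (u : Fin K → ℂ) :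
    vnorm (analysisMatrix b *ᵥ u) ≤ vnorm u := by
  rw [vnorm_eq_norm, vnorm_eq_norm]
  exact (Matrix.l2_opNorm_mulVec (analysisMatrix b) (WithLp.toLp 2 u)).trans
    (mul_le_of_le_one_left (norm_nonneg _) hb.l2_opNorm_analysisMatrix_le_one)

lemma BtBeqI.vnorm_conjTranspose_mulVec_le (hb : BtBeqI b) (c : Fin L → ℂ) :
    vnorm ((analysisMatrix b)ᴴ *ᵥ c) ≤ vnorm c := by
  rw [vnorm_eq_norm, vnorm_eq_norm]
  refine (Matrix.l2_opNorm_mulVec (analysisMatrix b)ᴴ (WithLp.toLp 2 c)).trans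
    (mul_le_of_le_one_left (norm_nonneg _) ?_)
  rw [Matrix.l2_opNorm_conjTranspose]
  exact hb.l2_opNorm_analysisMatrix_le_one

end Isometry

/-! ### Lipschitz continuity of the regularizer gradient -/

section Regularizer

lemma abs_G0'_le {t R : ℝ} (hR : 1 ≤ R) (ht : t ≤ R) : |G0' t| ≤ 2 * (R - 1) := by
  rw [G0', abs_of_nonneg (by positivity)]
  gcongr
  exact max_le (by linarith only [ht]) (by linarith only [hR])

lemma abs_G0'_sub_le (s t : ℝ) : |G0' s - G0' t| ≤ 2 * |s - t| := by
  rw [G0', G0', ← mul_sub, abs_mul, abs_two]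
  gcongr 2 * ?_
  simpa only [sub_sub_sub_cancel_right] using abs_max_sub_max_le_abs (s - 1) (t - 1) 0

/-- `G₀'(c‖z‖²) z`: up to the factor `c`, the Wirtinger gradient of the penalty `z ↦ G₀(c‖z‖²)`.
All three kinds of terms in `∇G` are of this form. -/
def penaltyGrad {E : Type*} [NormedAddCommGroup E] [NormedSpace ℝ E] (c : ℝ) (z : E) : E :=
  G0' (c * ‖z‖ ^ 2) • z

lemma norm_penaltyGrad_sub_le {E : Type*} [NormedAddCommGroup E] [NormedSpace ℝ E]
    {c R : ℝ} {z w : E} (hc : 0 ≤ c) (hR : 1 ≤ R) (hz : c * ‖z‖ ^ 2 ≤ R) (hw : c * ‖w‖ ^ 2 ≤ R) :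
    ‖penaltyGrad c w - penaltyGrad c z‖ ≤ (6 * R - 2) * ‖w - z‖ := by
  have h_split : penaltyGrad c w - penaltyGrad c z
      = G0' (c * ‖w‖ ^ 2) • (w - z) + (G0' (c * ‖w‖ ^ 2) - G0' (c * ‖z‖ ^ 2)) • z := by
    rw [penaltyGrad, penaltyGrad]
    module
  have h_arg : c * (‖w‖ + ‖z‖) * ‖z‖ ≤ 2 * R := by
    nlinarith only [hz, hw, mul_nonneg hc (sq_nonneg (‖w‖ - ‖z‖))]
  have h_slope : |G0' (c * ‖w‖ ^ 2) - G0' (c * ‖z‖ ^ 2)| * ‖z‖ ≤ 4 * R * ‖w - z‖ :=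
    calc |G0' (c * ‖w‖ ^ 2) - G0' (c * ‖z‖ ^ 2)| * ‖z‖
        ≤ 2 * |c * ‖w‖ ^ 2 - c * ‖z‖ ^ 2| * ‖z‖ := by gcongr; exact abs_G0'_sub_le _ _
      _ = 2 * (c * (‖w‖ + ‖z‖) * ‖z‖) * |‖w‖ - ‖z‖| := by
        rw [← mul_sub, sq_sub_sq, abs_mul, abs_mul, abs_of_nonneg hc,
          abs_of_nonneg (by positivity : 0 ≤ ‖w‖ + ‖z‖)]
        ring
      _ ≤ 2 * (2 * R) * ‖w - z‖ := by
        gcongr 2 * ?_ * ?_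
        exact abs_norm_sub_norm_le w z
      _ = 4 * R * ‖w - z‖ := by ring
  calc ‖penaltyGrad c w - penaltyGrad c z‖
      ≤ |G0' (c * ‖w‖ ^ 2)| * ‖w - z‖
          + |G0' (c * ‖w‖ ^ 2) - G0' (c * ‖z‖ ^ 2)| * ‖z‖ := by
        rw [h_split]
        exact (norm_add_le _ _).trans_eq (by simp only [norm_smul, Real.norm_eq_abs])
    _ ≤ 2 * (R - 1) * ‖w - z‖ + 4 * R * ‖w - z‖ := by
        gcongr
        exact abs_G0'_le hR hw
    _ = (6 * R - 2) * ‖w - z‖ := by ring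

open scoped Matrix

variable {K N L s : ℕ} {b : Fin L → Fin K → ℂ} {ρ μ R : ℝ} {dd : Fin s → ℝ} {i : Fin s}

/-- `Σₗ G₀'(c|bₗ*g|²) (bₗ*g) bₗ`: up to the factor `c`, the Wirtinger gradient of the incoherence
penalty `g ↦ Σₗ G₀(c|bₗ*g|²)`, written as `B*` applied to the entrywise penalty gradient of
`B g`. -/
def incoherenceGrad (b : Fin L → Fin K → ℂ) (c : ℝ) (g : Fin K → ℂ) : Fin K → ℂ :=
  (analysisMatrix b)ᴴ *ᵥ fun l => penaltyGrad c ((analysisMatrix b *ᵥ g) l)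

lemma vnorm_incoherenceGrad_sub_le {c : ℝ} {g g' : Fin K → ℂ} (hb : BtBeqI b) (hc : 0 ≤ c)
    (hR : 1 ≤ R) (hg : ∀ l, c * ‖vinner (b l) g‖ ^ 2 ≤ R)
    (hg' : ∀ l, c * ‖vinner (b l) g'‖ ^ 2 ≤ R) :
    vnorm (incoherenceGrad b c g' - incoherenceGrad b c g) ≤ (6 * R - 2) * vnorm (g' - g) := by
  have hR' : 0 ≤ 6 * R - 2 := by linarith only [hR]
  rw [incoherenceGrad, incoherenceGrad, ← Matrix.mulVec_sub]
  refine (hb.vnorm_conjTranspose_mulVec_le _).trans ?_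
  refine (vnorm_le_mul_vnorm (w := analysisMatrix b *ᵥ g' - analysisMatrix b *ᵥ g) hR'
    fun l => norm_penaltyGrad_sub_le hc hR (hg l) (hg' l)).trans ?_
  rw [← Matrix.mulVec_sub]
  gcongr
  exact hb.vnorm_analysisMatrix_mulVec_le _

/-- `G₀'(‖v‖²/(2D)) v`: up to the factor `1/(2D)`, the Wirtinger gradient of `G₀(‖v‖²/(2D))`. -/
def ballGrad (D : ℝ) (v : Fin N → ℂ) : Fin N → ℂ :=
  WithLp.ofLp (penaltyGrad (2 * D)⁻¹ (WithLp.toLp 2 v))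

lemma vnorm_ballGrad_sub_le {D : ℝ} {v v' : Fin N → ℂ} (hD : 0 < D) (hR : 1 ≤ R)
    (hv : vnormSq v ≤ 2 * D * R) (hv' : vnormSq v' ≤ 2 * D * R) :
    vnorm (ballGrad D v' - ballGrad D v) ≤ (6 * R - 2) * vnorm (v' - v) := by
  have h_arg {y : Fin N → ℂ} (hy : vnormSq y ≤ 2 * D * R) :
      (2 * D)⁻¹ * ‖WithLp.toLp 2 y‖ ^ 2 ≤ R := by
    rwa [← vnorm_eq_norm, vnorm_sq, inv_mul_le_iff₀ (by positivity)]
  rw [vnorm_eq_norm, vnorm_eq_norm]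
  exact norm_penaltyGrad_sub_le (by positivity) hR (h_arg hv) (h_arg hv')

lemma gradGx_eq_smul_ballGrad (ρ : ℝ) (dd : Fin s → ℝ) (x : Fin s → Fin N → ℂ) (i : Fin s) :
    gradGx ρ dd x i = (ρ / (2 * dd i)) • ballGrad (dd i) (x i) := by
  ext j
  simp only [gradGx, ballGrad, penaltyGrad, ← vnorm_eq_norm, vnorm_sq, Pi.smul_apply,
    PiLp.smul_apply, Complex.real_smul, div_eq_inv_mul (vnormSq (x i))]

lemma gradGh_eq_smul_add (b : Fin L → Fin K → ℂ) (ρ μ : ℝ) (dd : Fin s → ℝ)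
    (h : Fin s → Fin K → ℂ) (i : Fin s) :
    gradGh b ρ μ dd h i
      = (ρ / (2 * dd i)) • (ballGrad (dd i) (h i)
        + ((L : ℝ) / (4 * μ ^ 2)) • incoherenceGrad b (L / (8 * dd i * μ ^ 2)) (h i)) := by
  ext k
  have h_adjoint (c : Fin L → ℂ) : ((analysisMatrix b)ᴴ *ᵥ c) k = ∑ l, b l k * c l := by
    simp [Matrix.mulVec, dotProduct, analysisMatrix]
  simp only [gradGh, ballGrad, incoherenceGrad, penaltyGrad, ← vnorm_eq_norm, vnorm_sq,
    Pi.smul_apply, Pi.add_apply, PiLp.smul_apply, Complex.real_smul, div_eq_inv_mul (vnormSq (h i)),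
    h_adjoint, ← vinner_eq_analysisMatrix_mulVec, mul_div_right_comm]
  congr 3
  exact sum_congr rfl fun l _ => by ring

lemma vnorm_gradGx_sub_le {x x' : Fin s → Fin N → ℂ} (hρ : 0 ≤ ρ) (hd : 0 < dd i) (hR : 1 ≤ R)
    (hx : vnormSq (x i) ≤ 2 * dd i * R) (hx' : vnormSq (x' i) ≤ 2 * dd i * R) :
    vnorm (gradGx ρ dd x' i - gradGx ρ dd x i)
      ≤ ρ / (2 * dd i) * (6 * R - 2) * vnorm (x' i - x i) := by
  rw [gradGx_eq_smul_ballGrad, gradGx_eq_smul_ballGrad, ← smul_sub, vnorm_smul,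
    abs_of_nonneg (by positivity), mul_assoc]
  gcongr
  exact vnorm_ballGrad_sub_le hd hR hx hx'

lemma vnorm_gradGh_sub_le {h h' : Fin s → Fin K → ℂ} (hb : BtBeqI b) (hρ : 0 ≤ ρ) (hd : 0 < dd i)
    (hμ : 0 < μ) (hR : 1 ≤ R)
    (hh : vnormSq (h i) ≤ 2 * dd i * R) (hh' : vnormSq (h' i) ≤ 2 * dd i * R)
    (hBh : ∀ l, L * ‖vinner (b l) (h i)‖ ^ 2 ≤ 8 * dd i * μ ^ 2 * R)
    (hBh' : ∀ l, L * ‖vinner (b l) (h' i)‖ ^ 2 ≤ 8 * dd i * μ ^ 2 * R) :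
    vnorm (gradGh b ρ μ dd h' i - gradGh b ρ μ dd h i)
      ≤ ρ / (2 * dd i) * ((6 * R - 2) * (1 + L / (4 * μ ^ 2))) * vnorm (h' i - h i) := by
  have : 0 ≤ 6 * R - 2 := by linarith only [hR]
  have h_arg {t : ℝ} (ht : L * t ^ 2 ≤ 8 * dd i * μ ^ 2 * R) :
      L / (8 * dd i * μ ^ 2) * t ^ 2 ≤ R := by
    rwa [div_mul_eq_mul_div, div_le_iff₀' (by positivity)]
  have h_ball := vnorm_ballGrad_sub_le hd hR hh hh'
  have h_incoherence := vnorm_incoherenceGrad_sub_le (c := L / (8 * dd i * μ ^ 2)) hb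
    (by positivity) hR (fun l => h_arg (hBh l)) fun l => h_arg (hBh' l)
  rw [gradGh_eq_smul_add, gradGh_eq_smul_add, ← smul_sub, vnorm_smul,
    abs_of_nonneg (by positivity), add_sub_add_comm, ← smul_sub,
    mul_assoc (ρ / (2 * dd i))]
  gcongr
  refine (vnorm_add_le _ _).trans ?_
  rw [vnorm_smul, abs_of_nonneg (by positivity)]
  calc _ ≤ (6 * R - 2) * vnorm (h' i - h i)
          + L / (4 * μ ^ 2) * ((6 * R - 2) * vnorm (h' i - h i)) := by gcongr
    _ = (6 * R - 2) * (1 + L / (4 * μ ^ 2)) * vnorm (h' i - h i) := by ring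

end Regularizer

/-! ### The scalars `d₀`, `d_{i0}`, `κ` -/

section Scale

variable {s : ℕ} {d0 : Fin s → ℝ}

lemma dtot_sq (d0 : Fin s → ℝ) : dtot d0 ^ 2 = ∑ i, d0 i ^ 2 :=
  Real.sq_sqrt (sum_nonneg fun _ _ => sq_nonneg _)

lemma dtot_nonneg (d0 : Fin s → ℝ) : 0 ≤ dtot d0 := Real.sqrt_nonneg _

lemma le_dtot (d0 : Fin s → ℝ) (i : Fin s) : d0 i ≤ dtot d0 :=
  Real.le_sqrt_of_sq_le (single_le_sum (f := fun j => d0 j ^ 2) (fun _ _ => sq_nonneg _)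
    (mem_univ i))

lemma iInf_le_apply (d0 : Fin s → ℝ) (i : Fin s) : ⨅ j, d0 j ≤ d0 i :=
  ciInf_le (Set.finite_range d0).bddBelow i

lemma iInf_pos [Nonempty (Fin s)] (hd0 : ∀ i, 0 < d0 i) : 0 < ⨅ i, d0 i := by
  obtain ⟨i, hi⟩ := exists_eq_ciInf_of_finite (f := d0)
  exact hi ▸ hd0 i

lemma one_le_kappa [Nonempty (Fin s)] (hd0 : ∀ i, 0 < d0 i) : 1 ≤ kappa d0 := by
  rw [kappa, one_le_div (iInf_pos hd0)]
  exact (iInf_le_apply d0 (Classical.arbitrary _)).trans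
    (le_ciSup (Set.finite_range d0).bddAbove _)

end Scale

/-! ### The sublevel set `𝒩_F̃` lies in `𝒩_d ∩ 𝒩_μ` -/

section SublevelSet

variable {K N L s : ℕ} {b : Fin L → Fin K → ℂ} {a : Fin s → Fin L → Fin N → ℂ}
  {h0 : Fin s → Fin K → ℂ} {x0 : Fin s → Fin N → ℂ} {e : Fin L → ℂ} {d0 dd : Fin s → ℝ}
  {ρ μ ε : ℝ} {h : Fin s → Fin K → ℂ} {x : Fin s → Fin N → ℂ}

lemma G0_nonneg (t : ℝ) : 0 ≤ G0 t := sq_nonneg _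

lemma le_one_add_of_G0_le_sq {r t : ℝ} (hr : 0 ≤ r) (ht : G0 t ≤ r ^ 2) : t ≤ 1 + r := by
  have := (le_max_left (t - 1) 0).trans (le_of_sq_le_sq ht hr)
  linarith only [this]

lemma Gi_nonneg (hρ : 0 ≤ ρ) (di : ℝ) (g : Fin K → ℂ) (y : Fin N → ℂ) :
    0 ≤ Gi b ρ μ di g y :=
  mul_nonneg hρ (add_nonneg (add_nonneg (G0_nonneg _) (G0_nonneg _))
    (sum_nonneg fun _ _ => G0_nonneg _))

lemma Gi_le_Ftil (hρ : 0 ≤ ρ) (i : Fin s) :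
    Gi b ρ μ (dd i) (h i) (x i) ≤ Ftil b a h0 x0 e ρ μ dd h x :=
  (single_le_sum (f := fun j => Gi b ρ μ (dd j) (h j) (x j))
      (fun _ _ => Gi_nonneg hρ _ _ _) (mem_univ i)).trans
    (le_add_of_nonneg_left (vnormSq_nonneg _))

lemma le_of_Gi_le {di r : ℝ} {g : Fin K → ℂ} {y : Fin N → ℂ} (hρ : 0 < ρ) (hr : 0 ≤ r)
    (hG : Gi b ρ μ di g y ≤ ρ * r ^ 2) :
    vnormSq g / (2 * di) ≤ 1 + r ∧ vnormSq y / (2 * di) ≤ 1 + r ∧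
      ∀ l, L * ‖vinner (b l) g‖ ^ 2 / (8 * di * μ ^ 2) ≤ 1 + r := by
  have h_sum := (mul_le_mul_iff_right₀ hρ).1 hG
  have h_term (l : Fin L) := single_le_sum
    (f := fun l => G0 (L * ‖vinner (b l) g‖ ^ 2 / (8 * di * μ ^ 2))) (fun _ _ => G0_nonneg _)
    (mem_univ l)
  have h_rest := sum_nonneg (s := univ) fun (l : Fin L) _ =>
    G0_nonneg (L * ‖vinner (b l) g‖ ^ 2 / (8 * di * μ ^ 2))
  have h_g := G0_nonneg (vnormSq g / (2 * di))
  have h_y := G0_nonneg (vnormSq y / (2 * di))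
  exact ⟨le_one_add_of_G0_le_sq hr (by linarith only [h_sum, h_rest, h_y]),
    le_one_add_of_G0_le_sq hr (by linarith only [h_sum, h_rest, h_g]),
    fun l => le_one_add_of_G0_le_sq hr (by linarith only [h_sum, h_term l, h_g, h_y])⟩

lemma sublevel_bound_le [Nonempty (Fin s)] (hd0 : ∀ i, 0 < d0 i) (hε : 0 ≤ ε) (hε1 : ε ≤ 1)
    (hρ : (0.9 * dtot d0) ^ 2 + 2 * vnormSq e ≤ ρ) :
    ε ^ 2 * dtot d0 ^ 2 / (3 * s * kappa d0 ^ 2) + vnormSq e ≤ ρ * (4 / 5) ^ 2 := by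
  have hs : (1 : ℝ) ≤ s := by exact_mod_cast Fin.pos (Classical.arbitrary (Fin s))
  have h_signal : ε ^ 2 * dtot d0 ^ 2 / (3 * s * kappa d0 ^ 2) ≤ dtot d0 ^ 2 / 3 := by
    have hκ : 1 ≤ kappa d0 ^ 2 := one_le_pow₀ (one_le_kappa hd0)
    have hsκ : 1 * 1 ≤ s * kappa d0 ^ 2 := mul_le_mul hs hκ zero_le_one (by positivity)
    have hε2 : ε ^ 2 * dtot d0 ^ 2 ≤ dtot d0 ^ 2 :=
      mul_le_of_le_one_left (sq_nonneg _) (pow_le_one₀ hε hε1)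
    exact div_le_div₀ (sq_nonneg _) hε2 three_pos (by linarith only [hsκ])
  nlinarith only [h_signal, hρ, sq_nonneg (dtot d0), vnormSq_nonneg e]

lemma inNF.inNd_and_inNmu (hF : inNF b a h0 x0 e d0 ρ μ dd ε h x) (hd0 : ∀ i, 0 < d0 i)
    (hμ : 0 < μ) (hε : 0 ≤ ε) (hε1 : ε ≤ 1) (hdd : ∀ i, 0.9 * d0 i ≤ dd i ∧ dd i ≤ 1.1 * d0 i)
    (hρ : (0.9 * dtot d0) ^ 2 + 2 * vnormSq e ≤ ρ) :
    inNd d0 h x ∧ inNmu b d0 μ h := by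
  -- `G₀ ≤ (4/5)²` bounds the arguments by `9/5`, and `2 · 1.1 · 9/5 ≤ 4`, `8 · 1.1 · 9/5 ≤ 16`.
  have h_args (i : Fin s) : vnormSq (h i) ≤ 4 * d0 i ∧ vnormSq (x i) ≤ 4 * d0 i ∧
      ∀ l, L * ‖vinner (b l) (h i)‖ ^ 2 ≤ 16 * (d0 i * μ ^ 2) := by
    have : Nonempty (Fin s) := ⟨i⟩
    have hdi := hd0 i
    have hdd_pos : 0 < dd i := by linarith only [hdi, (hdd i).1]
    have hρ_pos : 0 < ρ := by
      have := hdi.trans_le (le_dtot d0 i)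
      have := vnormSq_nonneg e
      exact lt_of_lt_of_le (by positivity) hρ
    obtain ⟨hh, hx, hBh⟩ := le_of_Gi_le hρ_pos (by norm_num)
      ((Gi_le_Ftil hρ_pos.le i).trans (hF.trans (sublevel_bound_le hd0 hε hε1 hρ)))
    rw [div_le_iff₀ (by positivity)] at hh hx
    refine ⟨by linarith only [hh, (hdd i).2, hdi], by linarith only [hx, (hdd i).2, hdi],
      fun l => ?_⟩
    have hl := hBh l
    rw [div_le_iff₀ (by positivity)] at hl
    nlinarith only [hl, mul_le_mul_of_nonneg_right (hdd i).2 (sq_nonneg μ),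
      mul_nonneg hdi.le (sq_nonneg μ)]
  have h_sqrt (i : Fin s) : √(d0 i) ^ 2 = d0 i := Real.sq_sqrt (hd0 i).le
  refine ⟨fun i => ⟨?_, ?_⟩, fun i l => le_of_sq_le_sq ?_ (by positivity)⟩
  · refine le_of_sq_le_sq ?_ (by positivity)
    rw [vnorm_sq, mul_pow, h_sqrt]
    linarith only [(h_args i).1]
  · refine le_of_sq_le_sq ?_ (by positivity)
    rw [vnorm_sq, mul_pow, h_sqrt]
    linarith only [(h_args i).2.1]
  · rw [mul_pow, mul_pow, mul_pow, h_sqrt, Real.sq_sqrt (Nat.cast_nonneg L)]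
    linarith only [(h_args i).2.2 l]

end SublevelSet

/-! ### Lipschitz continuity of the data-fidelity gradient -/

section DataFidelity

open scoped Matrix

variable {K N L s : ℕ} {r : ℝ}

lemma pairNorm_mulVec_le (M : Fin s → Matrix (Fin K) (Fin N) ℂ) (x : Fin s → Fin N → ℂ)
    (h : Fin s → Fin K → ℂ) :
    pairNorm (fun i => M i *ᵥ x i) (fun i => (M i)ᴴ *ᵥ h i) ≤ famFrob M * pairNorm x h := by
  refine pairNorm_le_mul_pairNorm (famFrob_nonneg M) (fun i => ?_) fun i => ?_
  · exact (vnorm_mulVec_le _ _).trans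
      (mul_le_mul_of_nonneg_right (frob_le_famFrob M i) (vnorm_nonneg _))
  · refine (vnorm_mulVec_le _ _).trans (mul_le_mul_of_nonneg_right ?_ (vnorm_nonneg _))
    rw [frob_conjTranspose]
    exact frob_le_famFrob M i

lemma pairNorm_mulVec_le_of_vnorm_le (M : Fin s → Matrix (Fin K) (Fin N) ℂ)
    {x : Fin s → Fin N → ℂ} {h : Fin s → Fin K → ℂ} (hr : 0 ≤ r) (hx : ∀ i, vnorm (x i) ≤ r)
    (hh : ∀ i, vnorm (h i) ≤ r) :
    pairNorm (fun i => M i *ᵥ x i) (fun i => (M i)ᴴ *ᵥ h i) ≤ √2 * r * famFrob M := by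
  refine le_of_sq_le_sq ?_ (mul_nonneg (by positivity) (famFrob_nonneg M))
  rw [pairNorm_sq, mul_pow, mul_pow, Real.sq_sqrt zero_le_two, famFrob_sq, mul_sum]
  refine sum_le_sum fun i _ => ?_
  have h_block {m n : ℕ} (Z : Matrix (Fin m) (Fin n) ℂ) {v : Fin n → ℂ} (hv : vnorm v ≤ r) :
      vnorm (Z *ᵥ v) ^ 2 ≤ r ^ 2 * frob Z ^ 2 := by
    rw [← mul_pow]
    refine pow_le_pow_left₀ (vnorm_nonneg _) ((vnorm_mulVec_le Z v).trans ?_) 2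
    rw [mul_comm]
    exact mul_le_mul_of_nonneg_right hv (frob_nonneg Z)
  have h_adjoint := h_block (M i)ᴴ (hh i)
  rw [frob_conjTranspose] at h_adjoint
  linarith only [h_block (M i) (hx i), h_adjoint]

lemma rankOne_sub_rankOne (u u' : Fin K → ℂ) (v v' : Fin N → ℂ) :
    rankOne u' v' - rankOne u v = rankOne (u' - u) v' + rankOne u (v' - v) := by
  ext k j
  simp only [rankOne, Matrix.of_apply, Matrix.sub_apply, Matrix.add_apply, Pi.sub_apply, map_sub]
  ring

lemma frob_rankOne_sub_sq_le {u u' : Fin K → ℂ} {v v' : Fin N → ℂ} (hu : vnorm u ≤ r)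
    (hv' : vnorm v' ≤ r) :
    frob (rankOne u' v' - rankOne u v) ^ 2
      ≤ 2 * r ^ 2 * (vnorm (u' - u) ^ 2 + vnorm (v' - v) ^ 2) := by
  have h_le : frob (rankOne u' v' - rankOne u v) ≤ r * (vnorm (u' - u) + vnorm (v' - v)) := by
    rw [rankOne_sub_rankOne, mul_add, mul_comm r]
    refine (frob_add_le _ _).trans ?_
    rw [frob_rankOne, frob_rankOne]
    gcongr <;> exact vnorm_nonneg _
  calc frob (rankOne u' v' - rankOne u v) ^ 2
      ≤ (r * (vnorm (u' - u) + vnorm (v' - v))) ^ 2 := pow_le_pow_left₀ (frob_nonneg _) h_le 2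
    _ ≤ r ^ 2 * (2 * (vnorm (u' - u) ^ 2 + vnorm (v' - v) ^ 2)) := by
        rw [mul_pow]
        gcongr
        exact add_sq_le
    _ = 2 * r ^ 2 * (vnorm (u' - u) ^ 2 + vnorm (v' - v) ^ 2) := by ring

lemma famFrob_Hmap_sub_le {h h' : Fin s → Fin K → ℂ} {x x' : Fin s → Fin N → ℂ} (hr : 0 ≤ r)
    (hh : ∀ i, vnorm (h i) ≤ r) (hx' : ∀ i, vnorm (x' i) ≤ r) :
    famFrob (Hmap h' x' - Hmap h x) ≤ √2 * r * pairNorm (h' - h) (x' - x) := by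
  refine le_of_sq_le_sq ?_ (mul_nonneg (by positivity) (pairNorm_nonneg _ _))
  rw [famFrob_sq, mul_pow, mul_pow, Real.sq_sqrt zero_le_two, pairNorm_sq, mul_sum]
  exact sum_le_sum fun i _ => frob_rankOne_sub_sq_le (hh i) (hx' i)

variable (b : Fin L → Fin K → ℂ) (a : Fin s → Fin L → Fin N → ℂ) (h0 : Fin s → Fin K → ℂ)
  (x0 : Fin s → Fin N → ℂ) (e : Fin L → ℂ)

lemma residual_eq_calA_sub (h : Fin s → Fin K → ℂ) (x : Fin s → Fin N → ℂ) :
    residual b a h0 x0 e h x = calA b a (Hmap h x - Hmap h0 x0) - e := by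
  ext l
  simp only [residual, yvec, calA_sub, Pi.sub_apply, sub_add_eq_sub_sub]

lemma residual_sub_residual (h h' : Fin s → Fin K → ℂ) (x x' : Fin s → Fin N → ℂ) :
    residual b a h0 x0 e h' x' - residual b a h0 x0 e h x
      = calA b a (Hmap h' x' - Hmap h x) := by
  simp only [residual_eq_calA_sub, calA_sub]
  abel

lemma vnorm_residual_le (h : Fin s → Fin K → ℂ) (x : Fin s → Fin N → ℂ) :
    vnorm (residual b a h0 x0 e h x)
      ≤ calAOpNorm b a * famFrob (Hmap h x - Hmap h0 x0) + vnorm e := by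
  rw [residual_eq_calA_sub, vnorm_eq_norm, WithLp.toLp_sub]
  refine (norm_sub_le _ _).trans ?_
  rw [← vnorm_eq_norm, ← vnorm_eq_norm]
  gcongr
  exact vnorm_calA_le b a _

lemma famFrob_Hmap_sub_le_of_inNeps {d0 : Fin s → ℝ} {ε : ℝ} {h0 : Fin s → Fin K → ℂ}
    {x0 : Fin s → Fin N → ℂ} {h : Fin s → Fin K → ℂ} {x : Fin s → Fin N → ℂ}
    (hd0 : ∀ i, 0 < d0 i) (hε : 0 ≤ ε) (hz : inNeps h0 x0 d0 ε h x) :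
    famFrob (Hmap h x - Hmap h0 x0) ≤ ε * dtot d0 := by
  refine le_of_sq_le_sq ?_ (mul_nonneg hε (dtot_nonneg d0))
  rw [famFrob_sq, mul_pow, dtot_sq, mul_sum]
  refine sum_le_sum fun i _ => ?_
  rw [← mul_pow]
  exact pow_le_pow_left₀ (frob_nonneg _) ((div_le_iff₀ (hd0 i)).1 (hz i)) 2

variable {h h' : Fin s → Fin K → ℂ} {x x' : Fin s → Fin N → ℂ}

lemma calAdj_residual_eq_add (c : Fin L → Fin N → ℂ) (h h' : Fin s → Fin K → ℂ)
    (x x' : Fin s → Fin N → ℂ) :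
    calAdj b c (residual b a h0 x0 e h' x')
      = calAdj b c (calA b a (Hmap h' x' - Hmap h x)) + calAdj b c (residual b a h0 x0 e h x) := by
  rw [← calAdj_add, ← residual_sub_residual b a h0 x0 e, sub_add_cancel]

lemma gradFh_sub_gradFh (h h' : Fin s → Fin K → ℂ) (x x' : Fin s → Fin N → ℂ) :
    gradFh b a h0 x0 e h' x' - gradFh b a h0 x0 e h x
      = (fun i => calAdj b (a i) (calA b a (Hmap h' x' - Hmap h x)) *ᵥ x' i)
        + fun i => calAdj b (a i) (residual b a h0 x0 e h x) *ᵥ (x' - x) i := by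
  ext1 i
  simp only [gradFh, Pi.sub_apply, Pi.add_apply, calAdj_residual_eq_add b a h0 x0 e _ h h' x x',
    Matrix.add_mulVec, Matrix.mulVec_sub]
  exact add_sub_assoc _ _ _

lemma gradFx_sub_gradFx (h h' : Fin s → Fin K → ℂ) (x x' : Fin s → Fin N → ℂ) :
    gradFx b a h0 x0 e h' x' - gradFx b a h0 x0 e h x
      = (fun i => (calAdj b (a i) (calA b a (Hmap h' x' - Hmap h x)))ᴴ *ᵥ h' i)
        + fun i => (calAdj b (a i) (residual b a h0 x0 e h x))ᴴ *ᵥ (h' - h) i := by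
  ext1 i
  simp only [gradFx, Pi.sub_apply, Pi.add_apply, calAdj_residual_eq_add b a h0 x0 e _ h h' x x',
    Matrix.conjTranspose_add, Matrix.add_mulVec, Matrix.mulVec_sub]
  exact add_sub_assoc _ _ _

lemma pairNorm_gradF_sub_le (hr : 0 ≤ r) (hh : ∀ i, vnorm (h i) ≤ r)
    (hh' : ∀ i, vnorm (h' i) ≤ r) (hx' : ∀ i, vnorm (x' i) ≤ r) :
    pairNorm (gradFh b a h0 x0 e h' x' - gradFh b a h0 x0 e h x)
        (gradFx b a h0 x0 e h' x' - gradFx b a h0 x0 e h x)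
      ≤ (2 * r ^ 2 * calAOpNorm b a ^ 2 + calAOpNorm b a * vnorm (residual b a h0 x0 e h x))
        * pairNorm (h' - h) (x' - x) := by
  set A := calAOpNorm b a
  set P := pairNorm (h' - h) (x' - x)
  set res := residual b a h0 x0 e h x
  let M i := calAdj b (a i) res
  let D i := calAdj b (a i) (calA b a (Hmap h' x' - Hmap h x))
  have hA : 0 ≤ A := calAOpNorm_nonneg b a
  have hD : famFrob D ≤ A * (A * (√2 * r * P)) :=
    (famFrob_calAdj_le b a _).trans (mul_le_mul_of_nonneg_left ((vnorm_calA_le b a _).trans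
      (mul_le_mul_of_nonneg_left (famFrob_Hmap_sub_le hr hh hx') hA)) hA)
  rw [gradFh_sub_gradFh, gradFx_sub_gradFx]
  calc _ ≤ √2 * r * famFrob D + famFrob M * P := by
        refine (pairNorm_add_le _ _ _ _).trans (add_le_add
          (pairNorm_mulVec_le_of_vnorm_le D hr hx' hh') ?_)
        exact (pairNorm_mulVec_le M _ _).trans_eq (by rw [pairNorm_comm])
    _ ≤ √2 * r * (A * (A * (√2 * r * P))) + A * vnorm res * P := by
        gcongr
        · exact pairNorm_nonneg _ _
        · exact famFrob_calAdj_le b a res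
    _ = (2 * r ^ 2 * A ^ 2 + A * vnorm res) * P := by
        linear_combination r ^ 2 * A ^ 2 * P * Real.sq_sqrt (zero_le_two (α := ℝ))

end DataFidelity

/-! ### Local smoothness of `∇F̃` -/

section LocalSmoothness

variable {K N L s : ℕ} {b : Fin L → Fin K → ℂ} {a : Fin s → Fin L → Fin N → ℂ}
  {h0 : Fin s → Fin K → ℂ} {x0 : Fin s → Fin N → ℂ} {e : Fin L → ℂ} {d0 dd : Fin s → ℝ}
  {ρ μ ε : ℝ} {h h' : Fin s → Fin K → ℂ} {x x' : Fin s → Fin N → ℂ}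

lemma vnormSq_le_of_vnorm_le {n : ℕ} {v : Fin n → ℂ} {t : ℝ} (ht : 0 ≤ t)
    (hv : vnorm v ≤ 2 * √t) : vnormSq v ≤ 4 * t := by
  rw [← vnorm_sq]
  refine (pow_le_pow_left₀ (vnorm_nonneg v) hv 2).trans_eq ?_
  rw [mul_pow, Real.sq_sqrt ht]
  norm_num

lemma inNmu.mul_norm_vinner_sq_le (hz : inNmu b d0 μ h) (hd0 : ∀ i, 0 < d0 i) (i : Fin s)
    (l : Fin L) : L * ‖vinner (b l) (h i)‖ ^ 2 ≤ 16 * (d0 i * μ ^ 2) := by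
  have h_sq := pow_le_pow_left₀ (by positivity) (hz i l) 2
  rw [mul_pow, mul_pow, mul_pow, Real.sq_sqrt (Nat.cast_nonneg L),
    Real.sq_sqrt (hd0 i).le] at h_sq
  linarith only [h_sq]

lemma penalty_constant_le {D m : ℝ} (hρ : 0 ≤ ρ) (hm : 0 < m) (hD : 0.9 * m ≤ D) :
    ρ / (2 * D) * (6 * (20 / 9) - 2) ≤ ρ / m * 7 := by
  rw [div_mul_eq_mul_div, div_mul_eq_mul_div, div_le_div_iff₀ (by linarith only [hm, hD]) hm]
  nlinarith only [mul_le_mul_of_nonneg_left hD hρ, mul_nonneg hρ hm.le]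

lemma pairNorm_gradG_sub_le (hb : BtBeqI b) (hd0 : ∀ i, 0 < d0 i) (hμ : 0 < μ) (hρ : 0 ≤ ρ)
    (hdd : ∀ i, 0.9 * d0 i ≤ dd i) (hd : inNd d0 h x) (hd' : inNd d0 h' x')
    (hz : inNmu b d0 μ h) (hz' : inNmu b d0 μ h') :
    pairNorm (gradGh b ρ μ dd h' - gradGh b ρ μ dd h) (gradGx ρ dd x' - gradGx ρ dd x)
      ≤ ρ / (⨅ i, d0 i) * (7 * (1 + L / (4 * μ ^ 2))) * pairNorm (h' - h) (x' - x) := by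
  have hm : 0 ≤ ⨅ i, d0 i := Real.iInf_nonneg fun i => (hd0 i).le
  have hdd_pos (i : Fin s) : 0 < dd i := by linarith only [hdd i, hd0 i]
  -- The arguments of `G₀'` are at most `20/9 = 2/0.9`, which gives the factor `6 · 20/9 - 2`.
  have h_ball {n : ℕ} {v : Fin n → ℂ} (i : Fin s) (hv : vnorm v ≤ 2 * √(d0 i)) :
      vnormSq v ≤ 2 * dd i * (20 / 9) := by
    linarith only [vnormSq_le_of_vnorm_le (hd0 i).le hv, hdd i]
  have h_incoherence {g : Fin s → Fin K → ℂ} (hg : inNmu b d0 μ g) (i : Fin s) (l : Fin L) :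
      L * ‖vinner (b l) (g i)‖ ^ 2 ≤ 8 * dd i * μ ^ 2 * (20 / 9) := by
    nlinarith only [hg.mul_norm_vinner_sq_le hd0 i l,
      mul_le_mul_of_nonneg_right (hdd i) (sq_nonneg μ)]
  have h_const (i : Fin s) : ρ / (2 * dd i) * (6 * (20 / 9) - 2) ≤ ρ / (⨅ j, d0 j) * 7 := by
    have : Nonempty (Fin s) := ⟨i⟩
    exact penalty_constant_le hρ (iInf_pos hd0) (by linarith only [iInf_le_apply d0 i, hdd i])
  refine pairNorm_le_mul_pairNorm (by positivity) (fun i => ?_) fun i => ?_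
  · refine (vnorm_gradGh_sub_le hb hρ (hdd_pos i) hμ (by norm_num) (h_ball i (hd i).1)
      (h_ball i (hd' i).1) (h_incoherence hz i) (h_incoherence hz' i)).trans
      (mul_le_mul_of_nonneg_right ?_ (vnorm_nonneg _))
    rw [← mul_assoc, ← mul_assoc]
    exact mul_le_mul_of_nonneg_right (h_const i) (by positivity)
  · refine (vnorm_gradGx_sub_le hρ (hdd_pos i) (by norm_num) (h_ball i (hd i).2)
      (h_ball i (hd' i).2)).trans (mul_le_mul_of_nonneg_right ((h_const i).trans ?_)
      (vnorm_nonneg _))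
    gcongr
    exact le_mul_of_one_le_right (by norm_num) (le_add_of_nonneg_right (by positivity))

lemma inNd.vnorm_le (hd : inNd d0 h x) (i : Fin s) :
    vnorm (h i) ≤ 2 * √(dtot d0) ∧ vnorm (x i) ≤ 2 * √(dtot d0) := by
  have h_sqrt : 2 * √(d0 i) ≤ 2 * √(dtot d0) := by
    gcongr
    exact le_dtot d0 i
  exact ⟨(hd i).1.trans h_sqrt, (hd i).2.trans h_sqrt⟩

lemma mul_le_add_div_of_two_mul_sq_le {A D E m ρ : ℝ} (hm : 0 < m) (hmD : m ≤ D)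
    (hE : 2 * E ^ 2 ≤ ρ) : A * E ≤ D / 2 * A ^ 2 + ρ / (4 * m) := by
  have hD : 0 < D := hm.trans_le hmD
  have h_amgm : A * E ≤ D / 2 * A ^ 2 + 2 * E ^ 2 / (4 * D) := by
    have : D / 2 * A ^ 2 + 2 * E ^ 2 / (4 * D) - A * E = (D * A - E) ^ 2 / (2 * D) := by
      field_simp
      ring
    linarith only [this, div_nonneg (sq_nonneg (D * A - E)) (by linarith only [hD] : 0 ≤ 2 * D)]
  have hρ : 0 ≤ ρ := by linarith only [hE, sq_nonneg E]
  exact h_amgm.trans (by gcongr)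

lemma pairNorm_gradF_sub_le_of_inNd [Nonempty (Fin s)] (hd0 : ∀ i, 0 < d0 i) (hε : 0 ≤ ε)
    (hε1 : ε ≤ 1) (hρ : 2 * vnormSq e ≤ ρ) (hz : inNeps h0 x0 d0 ε h x) (hd : inNd d0 h x)
    (hd' : inNd d0 h' x') :
    pairNorm (gradFh b a h0 x0 e h' x' - gradFh b a h0 x0 e h x)
        (gradFx b a h0 x0 e h' x' - gradFx b a h0 x0 e h x)
      ≤ (10 * calAOpNorm b a ^ 2 * dtot d0 + ρ / (⨅ i, d0 i)) * pairNorm (h' - h) (x' - x) := by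
  have hA := calAOpNorm_nonneg b a
  have hD := dtot_nonneg d0
  have hm := iInf_pos hd0
  refine (pairNorm_gradF_sub_le b a h0 x0 e (by positivity) (fun i => (hd.vnorm_le i).1)
    (fun i => (hd'.vnorm_le i).1) fun i => (hd'.vnorm_le i).2).trans
    (mul_le_mul_of_nonneg_right ?_ (pairNorm_nonneg _ _))
  have h_signal : famFrob (Hmap h x - Hmap h0 x0) ≤ dtot d0 :=
    (famFrob_Hmap_sub_le_of_inNeps hd0 hε hz).trans (mul_le_of_le_one_left hD hε1)
  -- AM-GM trades the noise term for a multiple of `‖𝒜‖²` and one of `‖e‖² ≤ ρ/2`.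
  have h_noise : calAOpNorm b a * vnorm e
      ≤ dtot d0 / 2 * calAOpNorm b a ^ 2 + ρ / (4 * ⨅ i, d0 i) := by
    refine mul_le_add_div_of_two_mul_sq_le hm
      ((iInf_le_apply d0 (Classical.arbitrary _)).trans (le_dtot d0 _)) ?_
    rwa [vnorm_sq]
  calc _ ≤ 2 * (2 * √(dtot d0)) ^ 2 * calAOpNorm b a ^ 2
          + calAOpNorm b a * (calAOpNorm b a * dtot d0 + vnorm e) := by
        gcongr
        exact (vnorm_residual_le b a h0 x0 e h x).trans (by gcongr)
    _ = 9 * dtot d0 * calAOpNorm b a ^ 2 + calAOpNorm b a * vnorm e := by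
        rw [mul_pow, Real.sq_sqrt hD]
        ring
    _ ≤ 9 * dtot d0 * calAOpNorm b a ^ 2
          + (dtot d0 / 2 * calAOpNorm b a ^ 2 + ρ / (4 * ⨅ i, d0 i)) := by gcongr
    _ ≤ 10 * calAOpNorm b a ^ 2 * dtot d0 + ρ / (⨅ i, d0 i) := by
        have hρ0 : 0 ≤ ρ := by linarith only [hρ, vnormSq_nonneg e]
        have : ρ / (4 * ⨅ i, d0 i) ≤ ρ / (⨅ i, d0 i) := by
          gcongr
          linarith only [hm]
        nlinarith only [this, mul_nonneg hD (sq_nonneg (calAOpNorm b a))]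

lemma sqrt_gradDiffNormSq_le (h h' : Fin s → Fin K → ℂ) (x x' : Fin s → Fin N → ℂ) :
    √(gradDiffNormSq b a h0 x0 e ρ μ dd h x h' x')
      ≤ pairNorm (gradFh b a h0 x0 e h' x' - gradFh b a h0 x0 e h x)
          (gradFx b a h0 x0 e h' x' - gradFx b a h0 x0 e h x)
        + pairNorm (gradGh b ρ μ dd h' - gradGh b ρ μ dd h) (gradGx ρ dd x' - gradGx ρ dd x) := by
  refine le_trans (le_of_eq ?_) (pairNorm_add_le _ _ _ _)
  rw [← add_sub_add_comm, ← add_sub_add_comm]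
  rfl

theorem statement15_general {d : ℝ} (hs : 0 < s) (hb : BtBeqI b) (hd0 : ∀ i, 0 < d0 i) (hμ : 0 < μ)
    (hε : 0 ≤ ε) (hε1 : ε ≤ 1) (hdd : ∀ i, 0.9 * d0 i ≤ dd i ∧ dd i ≤ 1.1 * d0 i)
    (hdlow : 0.9 * dtot d0 ≤ d) (hρ : d ^ 2 + 2 * vnormSq e ≤ ρ)
    (hz : inNeps h0 x0 d0 ε h x) (hF : inNF b a h0 x0 e d0 ρ μ dd ε h x)
    (hF' : inNF b a h0 x0 e d0 ρ μ dd ε h' x') :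
    √(gradDiffNormSq b a h0 x0 e ρ μ dd h x h' x')
      ≤ (10 * calAOpNorm b a ^ 2 * dtot d0
          + 2 * ρ / (⨅ i, d0 i) * (5 + 2 * (L : ℝ) / μ ^ 2)) * pairNorm (h' - h) (x' - x) := by
  have : Nonempty (Fin s) := ⟨⟨0, hs⟩⟩
  have hρd : (0.9 * dtot d0) ^ 2 + 2 * vnormSq e ≤ ρ := by
    have := pow_le_pow_left₀ (mul_nonneg (by norm_num) (dtot_nonneg d0)) hdlow 2
    linarith only [this, hρ]
  obtain ⟨hd, hμz⟩ := hF.inNd_and_inNmu hd0 hμ hε hε1 hdd hρd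
  obtain ⟨hd', hμz'⟩ := hF'.inNd_and_inNmu hd0 hμ hε hε1 hdd hρd
  have hρe : 2 * vnormSq e ≤ ρ := by linarith only [hρ, sq_nonneg d]
  have hρ0 : 0 ≤ ρ := by linarith only [hρe, vnormSq_nonneg e]
  have hρm : 0 ≤ ρ / ⨅ i, d0 i := div_nonneg hρ0 (iInf_pos hd0).le
  have hLμ : 0 ≤ (L : ℝ) / μ ^ 2 := by positivity
  calc √(gradDiffNormSq b a h0 x0 e ρ μ dd h x h' x')
      ≤ (10 * calAOpNorm b a ^ 2 * dtot d0 + ρ / ⨅ i, d0 i) * pairNorm (h' - h) (x' - x)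
          + ρ / (⨅ i, d0 i) * (7 * (1 + L / (4 * μ ^ 2))) * pairNorm (h' - h) (x' - x) :=
        (sqrt_gradDiffNormSq_le h h' x x').trans (add_le_add
          (pairNorm_gradF_sub_le_of_inNd hd0 hε hε1 hρe hz hd hd')
          (pairNorm_gradG_sub_le hb hd0 hμ hρ0 (fun i => (hdd i).1) hd hd' hμz hμz'))
    _ = (10 * calAOpNorm b a ^ 2 * dtot d0 + ρ / (⨅ i, d0 i) * (8 + 7 / 4 * (L / μ ^ 2)))
          * pairNorm (h' - h) (x' - x) := by ring
    _ ≤ _ := by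
        refine mul_le_mul_of_nonneg_right ?_ (pairNorm_nonneg _ _)
        rw [mul_comm 2 ρ, mul_div_right_comm, mul_div_assoc 2 (L : ℝ)]
        nlinarith only [hρm, mul_nonneg hρm hLμ]

end LocalSmoothness

/-- local smoothness of `∇F̃`. -/
theorem statement15
    {K N L s : ℕ} (hK : 0 < K) (hN : 0 < N) (hL : 0 < L) (hs : 0 < s)
    (b : Fin L → Fin K → ℂ) (hb : BtBeqI b)
    (a : Fin s → Fin L → Fin N → ℂ)
    (h0 : Fin s → Fin K → ℂ) (x0 : Fin s → Fin N → ℂ)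
    (d0 : Fin s → ℝ) (hd0 : ∀ i, 0 < d0 i)
    (hh0 : ∀ i, vnorm (h0 i) = Real.sqrt (d0 i))
    (hx0 : ∀ i, vnorm (x0 i) = Real.sqrt (d0 i))
    (e : Fin L → ℂ) (μ ρ d ε : ℝ) (dd : Fin s → ℝ)
    (hμ : 0 < μ) (hε : 0 < ε) (hε15 : ε ≤ 1 / 15)
    (hdd : ∀ i, 0.9 * d0 i ≤ dd i ∧ dd i ≤ 1.1 * d0 i)
    (hdlow : 0.9 * dtot d0 ≤ d) (hdhigh : d ≤ 1.1 * dtot d0)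
    (hρ : d ^ 2 + 2 * vnormSq e ≤ ρ)
    (hRIP : LocalRIP b a h0 x0 d0 μ ε)
    (hAe : AadjNorm b a e ≤ ε * dtot d0 / (10 * Real.sqrt 2 * (s : ℝ) * kappa d0))
    (hAop : 1 ≤ calAOpNorm b a) :
    ∀ (h : Fin s → Fin K → ℂ) (x : Fin s → Fin N → ℂ)
      (u : Fin s → Fin K → ℂ) (v : Fin s → Fin N → ℂ),
      inNeps h0 x0 d0 ε h x → inNF b a h0 x0 e d0 ρ μ dd ε h x →
      inNeps h0 x0 d0 ε (fun i k => h i k + u i k) (fun i j => x i j + v i j) →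
      inNF b a h0 x0 e d0 ρ μ dd ε (fun i k => h i k + u i k) (fun i j => x i j + v i j) →
      Real.sqrt (gradDiffNormSq b a h0 x0 e ρ μ dd h x
          (fun i k => h i k + u i k) (fun i j => x i j + v i j))
        ≤ (10 * calAOpNorm b a ^ 2 * dtot d0
            + 2 * ρ / (⨅ i, d0 i) * (5 + 2 * (L : ℝ) / μ ^ 2)) * pairNorm u v := by
  intro h x u v hz hF _ hF'
  have h_bound := statement15_general (h' := h + u) (x' := x + v) hs hb hd0 hμ hε.le
    (hε15.trans (by norm_num)) hdd hdlow hρ hz hF hF'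
  rwa [add_sub_cancel_left, add_sub_cancel_left] at h_bound

end RGD
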